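/- There is no consequence-respecting, (∧,∨)-preserving translation from ω-variable classical propositional logic into ω-variable intuitionistic propositional logic: there is no function f : F_ω → F_ω such that f(φ∧ψ) = f(φ)∧f(ψ) and f(φ∨ψ) = f(φ)∨f(ψ) for all φ, ψ, and such that for every nonempty Γ ⊆ F_ω and every φ, Γ ⊢_C φ iff f(Γ) ⊢ f(φ). Consequently there is no such translation into n-variable intuitionistic logic for any n. -/

import Mathlib

/-!
The obstruction only involves joins and the image `b = f ⊤` of the top formula.

Classically there are infinitely many non-tautologies `c₀, c₁, …` any two of which have a
tautological disjunction (the complements of pairwise disjoint nonzero elements of `B_ω`).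
A translation would yield formulas `f cᵢ` with `b ⊬ f cᵢ` but `b ⊢ f cᵢ ∨ f cⱼ` for `i ≠ j`.

Intuitionistically this is impossible for any single formula `b`. For each `i`, extend `{b}` to a
set `Tᵢ` of subformulas of `b` that is maximal among those not proving `f cᵢ`. Since `b` has
finitely many subformulas, `Tᵢ = Tⱼ = T` for some `i ≠ j`. Maximality makes `T` prime with
respect to disjunctions that are subformulas of `b`, hence every member of `T` satisfies the
Aczel slash relative to `T` (`slash_iff_prov`), and soundness of the slash (`slash_of_prov`) gives
`T` the disjunction property. As `T ⊢ f cᵢ ∨ f cⱼ`, one of the two is provable from `T`,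
a contradiction.
-/

/-- Propositional formulas over a set `V` of variables, built from `∧, ∨, →, ⊥, ⊤`.
`¬φ` is the abbreviation `φ → ⊥`. -/
inductive PropForm (V : Type) : Type
  | var : V → PropForm V
  | bot : PropForm V
  | top : PropForm V
  | and : PropForm V → PropForm V → PropForm V
  | or : PropForm V → PropForm V → PropForm V
  | imp : PropForm V → PropForm V → PropForm V

/-- A natural-deduction style consequence relation.  When the parameter `cl` is `False`
this is exactly the consequence relation `⊢` of intuitionistic propositional logic;
when `cl` is `True` the rule of excluded middle becomes available and it is the
consequence relation `⊢_C` of classical propositional logic. -/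
inductive Prov {V : Type} (cl : Prop) : Set (PropForm V) → PropForm V → Prop
  | ax : ∀ {Γ : Set (PropForm V)} {φ}, φ ∈ Γ → Prov cl Γ φ
  | topI : ∀ {Γ}, Prov cl Γ .top
  | botE : ∀ {Γ φ}, Prov cl Γ .bot → Prov cl Γ φ
  | andI : ∀ {Γ φ ψ}, Prov cl Γ φ → Prov cl Γ ψ → Prov cl Γ (.and φ ψ)
  | andE1 : ∀ {Γ φ ψ}, Prov cl Γ (.and φ ψ) → Prov cl Γ φ
  | andE2 : ∀ {Γ φ ψ}, Prov cl Γ (.and φ ψ) → Prov cl Γ ψ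
  | orI1 : ∀ {Γ φ ψ}, Prov cl Γ φ → Prov cl Γ (.or φ ψ)
  | orI2 : ∀ {Γ φ ψ}, Prov cl Γ ψ → Prov cl Γ (.or φ ψ)
  | orE : ∀ {Γ φ ψ χ}, Prov cl Γ (.or φ ψ) → Prov cl (insert φ Γ) χ →
      Prov cl (insert ψ Γ) χ → Prov cl Γ χ
  | impI : ∀ {Γ φ ψ}, Prov cl (insert φ Γ) ψ → Prov cl Γ (.imp φ ψ)
  | impE : ∀ {Γ φ ψ}, Prov cl Γ (.imp φ ψ) → Prov cl Γ φ → Prov cl Γ ψ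
  | em : ∀ {Γ φ}, cl → Prov cl Γ (.or φ (.imp φ .bot))

/-- Intuitionistic consequence `Γ ⊢ φ`. -/
abbrev IProv {V : Type} (Γ : Set (PropForm V)) (φ : PropForm V) : Prop := Prov False Γ φ

/-- Classical consequence `Γ ⊢_C φ`. -/
abbrev CProv {V : Type} (Γ : Set (PropForm V)) (φ : PropForm V) : Prop := Prov True Γ φ

theorem Prov.mono {V : Type} {cl : Prop} {Γ : Set (PropForm V)} {φ : PropForm V}
    (h : Prov cl Γ φ) : ∀ {Δ : Set (PropForm V)}, Γ ⊆ Δ → Prov cl Δ φ := by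
  induction h with
  | ax hmem => intro Δ hsub; exact Prov.ax (hsub hmem)
  | topI => intro Δ _; exact Prov.topI
  | botE _ ih => intro Δ hsub; exact Prov.botE (ih hsub)
  | andI _ _ ih1 ih2 => intro Δ hsub; exact Prov.andI (ih1 hsub) (ih2 hsub)
  | andE1 _ ih => intro Δ hsub; exact Prov.andE1 (ih hsub)
  | andE2 _ ih => intro Δ hsub; exact Prov.andE2 (ih hsub)
  | orI1 _ ih => intro Δ hsub; exact Prov.orI1 (ih hsub)
  | orI2 _ ih => intro Δ hsub; exact Prov.orI2 (ih hsub)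
  | orE _ _ _ ih1 ih2 ih3 =>
      intro Δ hsub
      exact Prov.orE (ih1 hsub) (ih2 (Set.insert_subset_insert hsub))
        (ih3 (Set.insert_subset_insert hsub))
  | impI _ ih => intro Δ hsub; exact Prov.impI (ih (Set.insert_subset_insert hsub))
  | impE _ _ ih1 ih2 => intro Δ hsub; exact Prov.impE (ih1 hsub) (ih2 hsub)
  | em hcl => intro Δ _; exact Prov.em hcl

theorem Prov.cut {V : Type} {cl : Prop} {Γ : Set (PropForm V)} {φ ψ : PropForm V}
    (h1 : Prov cl Γ φ) (h2 : Prov cl (insert φ Γ) ψ) : Prov cl Γ ψ :=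
  Prov.impE (Prov.impI h2) h1

/-- Single-premise consequence: `φ ⊢ ψ` (intuitionistic when `cl = False`). -/
def Entails {V : Type} (cl : Prop) (φ ψ : PropForm V) : Prop := Prov cl {φ} ψ

theorem Entails.refl {V : Type} {cl : Prop} (φ : PropForm V) : Entails cl φ φ := Prov.ax rfl

theorem Entails.trans' {V : Type} {cl : Prop} {φ ψ χ : PropForm V}
    (h1 : Entails cl φ ψ) (h2 : Entails cl ψ χ) : Entails cl φ χ :=
  Prov.cut h1 (h2.mono (Set.singleton_subset_iff.mpr (Set.mem_insert _ _)))

theorem Entails.and_congr {V : Type} {cl : Prop} {a b c d : PropForm V}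
    (h1 : Entails cl a b) (h2 : Entails cl c d) :
    Entails cl (PropForm.and a c) (PropForm.and b d) := by
  have ha : Prov cl ({PropForm.and a c} : Set (PropForm V)) a := Prov.andE1 (Prov.ax rfl)
  have hc : Prov cl ({PropForm.and a c} : Set (PropForm V)) c := Prov.andE2 (Prov.ax rfl)
  exact Prov.andI
    (Prov.cut ha (h1.mono (Set.singleton_subset_iff.mpr (Set.mem_insert _ _))))
    (Prov.cut hc (h2.mono (Set.singleton_subset_iff.mpr (Set.mem_insert _ _))))

theorem Entails.or_congr {V : Type} {cl : Prop} {a b c d : PropForm V}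
    (h1 : Entails cl a b) (h2 : Entails cl c d) :
    Entails cl (PropForm.or a c) (PropForm.or b d) :=
  Prov.orE (Prov.ax rfl)
    (Prov.orI1 (h1.mono (Set.singleton_subset_iff.mpr (Set.mem_insert _ _))))
    (Prov.orI2 (h2.mono (Set.singleton_subset_iff.mpr (Set.mem_insert _ _))))

/-- Logical equivalence (intuitionistic when `cl = False`, classical when `cl = True`). -/
def provSetoid (cl : Prop) (V : Type) : Setoid (PropForm V) where
  r φ ψ := Entails cl φ ψ ∧ Entails cl ψ φ
  iseqv := ⟨fun φ => ⟨Entails.refl φ, Entails.refl φ⟩, fun h => ⟨h.2, h.1⟩,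
    fun h1 h2 => ⟨h1.1.trans' h2.1, h2.2.trans' h1.2⟩⟩

/-- The Lindenbaum algebra of formulas over `V` modulo logical equivalence.
`Lindenbaum False (Fin n)` is the free Heyting algebra `H_n`,
`Lindenbaum False ℕ` is `H_ω`, and `Lindenbaum True ℕ` is the free Boolean
algebra `B_ω`. -/
def Lindenbaum (cl : Prop) (V : Type) : Type := Quotient (provSetoid cl V)

/-- The equivalence class of a formula. -/
def Lindenbaum.mk (cl : Prop) {V : Type} (φ : PropForm V) : Lindenbaum cl V :=
  Quotient.mk (provSetoid cl V) φ

/-- The order of the Lindenbaum algebra: `[φ] ≤ [ψ]` iff `φ ⊢ ψ`. -/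
def Lindenbaum.le {cl : Prop} {V : Type} : Lindenbaum cl V → Lindenbaum cl V → Prop :=
  Quotient.lift₂ (Entails cl) (by
    intro a b a' b' ha hb
    obtain ⟨ha1, ha2⟩ := ha
    obtain ⟨hb1, hb2⟩ := hb
    exact propext ⟨fun h => (ha2.trans' h).trans' hb1, fun h => (ha1.trans' h).trans' hb2⟩)

/-- The meet `∧` of the Lindenbaum algebra. -/
def Lindenbaum.inf {cl : Prop} {V : Type} :
    Lindenbaum cl V → Lindenbaum cl V → Lindenbaum cl V :=
  Quotient.map₂ PropForm.and (by
    intro a a' ha b b' hb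
    obtain ⟨ha1, ha2⟩ := ha
    obtain ⟨hb1, hb2⟩ := hb
    exact ⟨ha1.and_congr hb1, ha2.and_congr hb2⟩)

/-- The join `∨` of the Lindenbaum algebra. -/
def Lindenbaum.sup {cl : Prop} {V : Type} :
    Lindenbaum cl V → Lindenbaum cl V → Lindenbaum cl V :=
  Quotient.map₂ PropForm.or (by
    intro a a' ha b b' hb
    obtain ⟨ha1, ha2⟩ := ha
    obtain ⟨hb1, hb2⟩ := hb
    exact ⟨ha1.or_congr hb1, ha2.or_congr hb2⟩)

namespace LatticeTranslation

variable {V : Type}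

/-- The set of subformulas of a formula, including the formula itself. -/
def subf : PropForm V → Set (PropForm V)
  | .var x => {.var x}
  | .bot => {.bot}
  | .top => {.top}
  | .and φ ψ => insert (.and φ ψ) (subf φ ∪ subf ψ)
  | .or φ ψ => insert (.or φ ψ) (subf φ ∪ subf ψ)
  | .imp φ ψ => insert (.imp φ ψ) (subf φ ∪ subf ψ)

theorem mem_subf_self (φ : PropForm V) : φ ∈ subf φ := by
  cases φ <;> simp [subf]

theorem subf_finite (φ : PropForm V) : (subf φ).Finite := by
  induction φ with
  | var x => exact Set.finite_singleton _
  | bot => exact Set.finite_singleton _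
  | top => exact Set.finite_singleton _
  | and φ ψ h1 h2 => exact (h1.union h2).insert _
  | or φ ψ h1 h2 => exact (h1.union h2).insert _
  | imp φ ψ h1 h2 => exact (h1.union h2).insert _

theorem subf_subset_of_mem {χ φ : PropForm V} (h : χ ∈ subf φ) : subf χ ⊆ subf φ := by
  induction φ with
  | var x => cases h; exact subset_rfl
  | bot => cases h; exact subset_rfl
  | top => cases h; exact subset_rfl
  | and φ ψ h1 h2 =>
    rcases h with rfl | h | h
    · exact subset_rfl
    · exact fun _ hx => Or.inr (Or.inl (h1 h hx))
    · exact fun _ hx => Or.inr (Or.inr (h2 h hx))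
  | or φ ψ h1 h2 =>
    rcases h with rfl | h | h
    · exact subset_rfl
    · exact fun _ hx => Or.inr (Or.inl (h1 h hx))
    · exact fun _ hx => Or.inr (Or.inr (h2 h hx))
  | imp φ ψ h1 h2 =>
    rcases h with rfl | h | h
    · exact subset_rfl
    · exact fun _ hx => Or.inr (Or.inl (h1 h hx))
    · exact fun _ hx => Or.inr (Or.inr (h2 h hx))

/-! ### The Aczel slash -/

/-- The Aczel slash `T | φ`: forcing of `φ` at a new root placed below the models of `T`. -/
def slash (T : Set (PropForm V)) : PropForm V → Prop
  | .var x => IProv T (.var x)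
  | .bot => False
  | .top => True
  | .and φ ψ => slash T φ ∧ slash T ψ
  | .or φ ψ => slash T φ ∨ slash T ψ
  | .imp φ ψ => IProv T (.imp φ ψ) ∧ (slash T φ → slash T ψ)

theorem prov_of_slash {T : Set (PropForm V)} {φ : PropForm V} (h : slash T φ) : IProv T φ := by
  induction φ with
  | var x => exact h
  | bot => exact h.elim
  | top => exact .topI
  | and φ ψ h1 h2 => exact .andI (h1 h.1) (h2 h.2)
  | or φ ψ h1 h2 => exact h.elim (fun h => .orI1 (h1 h)) (fun h => .orI2 (h2 h))
  | imp φ ψ h1 h2 => exact h.1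

/-- Deductive closure of `T ⊢ ·` under provability from an arbitrary (possibly infinite) set of
consequences of `T`. -/
theorem prov_trans {cl : Prop} {Γ : Set (PropForm V)} {φ : PropForm V} (h : Prov cl Γ φ) :
    ∀ {T : Set (PropForm V)}, (∀ γ ∈ Γ, Prov cl T γ) → Prov cl T φ := by
  have ext : ∀ {Γ T : Set (PropForm V)} {χ : PropForm V}, (∀ γ ∈ Γ, Prov cl T γ) →
      ∀ γ ∈ insert χ Γ, Prov cl (insert χ T) γ := by
    rintro Γ T χ hT γ (rfl | hγ)
    · exact .ax (Set.mem_insert _ _)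
    · exact (hT γ hγ).mono (Set.subset_insert _ _)
  induction h with
  | ax hm => exact fun hT => hT _ hm
  | topI => exact fun _ => .topI
  | botE _ ih => exact fun hT => .botE (ih hT)
  | andI _ _ ih1 ih2 => exact fun hT => .andI (ih1 hT) (ih2 hT)
  | andE1 _ ih => exact fun hT => .andE1 (ih hT)
  | andE2 _ ih => exact fun hT => .andE2 (ih hT)
  | orI1 _ ih => exact fun hT => .orI1 (ih hT)
  | orI2 _ ih => exact fun hT => .orI2 (ih hT)
  | orE _ _ _ ih ih1 ih2 => exact fun hT => .orE (ih hT) (ih1 (ext hT)) (ih2 (ext hT))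
  | impI _ ih => exact fun hT => .impI (ih (ext hT))
  | impE _ _ ih1 ih2 => exact fun hT => .impE (ih1 hT) (ih2 hT)
  | em hcl => exact fun _ => .em hcl

/-- Soundness of the slash for intuitionistic provability. -/
theorem slash_of_prov {T Γ : Set (PropForm V)} {φ : PropForm V} (h : IProv Γ φ) :
    (∀ γ ∈ Γ, slash T γ) → slash T φ := by
  have ext : ∀ {Γ : Set (PropForm V)} {χ : PropForm V}, (∀ γ ∈ Γ, slash T γ) → slash T χ →
      ∀ γ ∈ insert χ Γ, slash T γ := by
    rintro Γ χ hΓ hχ γ (rfl | hγ)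
    · exact hχ
    · exact hΓ γ hγ
  induction h with
  | ax hm => exact fun hΓ => hΓ _ hm
  | topI => exact fun _ => trivial
  | botE _ ih => exact fun hΓ => (ih hΓ).elim
  | andI _ _ ih1 ih2 => exact fun hΓ => ⟨ih1 hΓ, ih2 hΓ⟩
  | andE1 _ ih => exact fun hΓ => (ih hΓ).1
  | andE2 _ ih => exact fun hΓ => (ih hΓ).2
  | orI1 _ ih => exact fun hΓ => Or.inl (ih hΓ)
  | orI2 _ ih => exact fun hΓ => Or.inr (ih hΓ)
  | orE _ _ _ ih ih1 ih2 =>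
    exact fun hΓ => (ih hΓ).elim (fun h => ih1 (ext hΓ h)) (fun h => ih2 (ext hΓ h))
  | impI h ih =>
    exact fun hΓ => ⟨prov_trans (.impI h) fun γ hγ => prov_of_slash (hΓ γ hγ),
      fun h => ih (ext hΓ h)⟩
  | impE _ _ ih1 ih2 => exact fun hΓ => (ih1 hΓ).2 (ih2 hΓ)
  | em hcl => exact hcl.elim

/-- If `T` is consistent and prime with respect to disjunctions in `S`, then slash and
provability from `T` agree on formulas all of whose subformulas lie in `S`. -/
theorem slash_iff_prov {S T : Set (PropForm V)} (hbot : ¬IProv T .bot)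
    (hor : ∀ φ ψ, φ ∈ S → ψ ∈ S → IProv T (.or φ ψ) → IProv T φ ∨ IProv T ψ)
    (φ : PropForm V) (hS : subf φ ⊆ S) : slash T φ ↔ IProv T φ := by
  refine ⟨prov_of_slash, ?_⟩
  induction φ with
  | var x => exact id
  | bot => exact hbot
  | top => exact fun _ => trivial
  | and φ ψ h1 h2 =>
    exact fun h => ⟨h1 (fun _ hx => hS (Or.inr (Or.inl hx))) (.andE1 h),
      h2 (fun _ hx => hS (Or.inr (Or.inr hx))) (.andE2 h)⟩
  | or φ ψ h1 h2 =>
    exact fun h => (hor φ ψ (hS (Or.inr (Or.inl (mem_subf_self φ))))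
      (hS (Or.inr (Or.inr (mem_subf_self ψ)))) h).imp
        (h1 fun _ hx => hS (Or.inr (Or.inl hx))) (h2 fun _ hx => hS (Or.inr (Or.inr hx)))
  | imp φ ψ h1 h2 =>
    exact fun h => ⟨h, fun hφ =>
      h2 (fun _ hx => hS (Or.inr (Or.inr hx))) (.impE h (prov_of_slash hφ))⟩

/-! ### Families of pairwise covering formulas -/

/-- If `b ⊬ c`, there is a set `T ∋ b` of subformulas of `b` not proving `c` and having the
disjunction property. -/
theorem exists_prime_set (b c : PropForm V) (h : ¬IProv {b} c) :
    ∃ T ⊆ subf b, b ∈ T ∧ ¬IProv T c ∧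
      ∀ φ ψ, IProv T (.or φ ψ) → IProv T φ ∨ IProv T ψ := by
  have hfin : {T : Set (PropForm V) | T ⊆ subf b ∧ b ∈ T ∧ ¬IProv T c}.Finite :=
    (subf_finite b).finite_subsets.subset fun T hT => hT.1
  obtain ⟨T, ⟨hTS, hbT, hTc⟩, hmax⟩ := hfin.exists_maximal
    ⟨{b}, Set.singleton_subset_iff.2 (mem_subf_self b), rfl, h⟩
  -- Adjoining to `T` a subformula of `b` that `T` does not prove makes `c` provable.
  have key : ∀ φ ∈ subf b, ¬IProv T φ → IProv (insert φ T) c := by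
    intro φ hφ hn
    by_contra hc
    exact hn (.ax (hmax ⟨Set.insert_subset hφ hTS, Or.inr hbT, hc⟩ (Set.subset_insert φ T)
      (Set.mem_insert φ T)))
  have hor : ∀ φ ψ, φ ∈ subf b → ψ ∈ subf b → IProv T (.or φ ψ) →
      IProv T φ ∨ IProv T ψ := by
    intro φ ψ hφ hψ hT
    by_contra! hn
    exact hTc (.orE hT (key φ hφ hn.1) (key ψ hψ hn.2))
  refine ⟨T, hTS, hbT, hTc, fun φ ψ hT => ?_⟩
  have hs : slash T (.or φ ψ) := slash_of_prov hT fun γ hγ =>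
    (slash_iff_prov (fun hb => hTc (.botE hb)) hor γ (subf_subset_of_mem (hTS hγ))).2 (.ax hγ)
  exact hs.imp prov_of_slash prov_of_slash

theorem no_infinite_covering_family (b : PropForm V) (c : ℕ → PropForm V)
    (hc : ∀ i, ¬IProv {b} (c i)) (hor : ∀ i j, i < j → IProv {b} (.or (c i) (c j))) : False := by
  choose T hTS hbT hTc hdisj using fun i => exists_prime_set b (c i) (hc i)
  have hnotinj : ∃ i j, i < j ∧ T i = T j := by
    by_contra! hn
    have hinj : Function.Injective T := fun i j hij =>
      le_antisymm (not_lt.1 fun h => hn _ _ h hij.symm) (not_lt.1 fun h => hn _ _ h hij)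
    exact Set.infinite_of_injective_forall_mem hinj hTS (subf_finite b).finite_subsets
  obtain ⟨i, j, hij, hT⟩ := hnotinj
  rcases hdisj i _ _ ((hor i j hij).mono (Set.singleton_subset_iff.2 (hbT i))) with h | h
  · exact hTc i h
  · exact hTc j (hT ▸ h)

/-! ### The classical side -/

/-- Truth value of a formula under a classical valuation. -/
def eval (v : V → Prop) : PropForm V → Prop
  | .var x => v x
  | .bot => False
  | .top => True
  | .and φ ψ => eval v φ ∧ eval v ψ
  | .or φ ψ => eval v φ ∨ eval v ψ
  | .imp φ ψ => eval v φ → eval v ψ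

theorem eval_of_prov {cl : Prop} (v : V → Prop) {Γ : Set (PropForm V)} {φ : PropForm V}
    (h : Prov cl Γ φ) : (∀ γ ∈ Γ, eval v γ) → eval v φ := by
  have ext : ∀ {Γ : Set (PropForm V)} {χ : PropForm V}, (∀ γ ∈ Γ, eval v γ) → eval v χ →
      ∀ γ ∈ insert χ Γ, eval v γ := by
    rintro Γ χ hΓ hχ γ (rfl | hγ)
    · exact hχ
    · exact hΓ γ hγ
  induction h with
  | ax hm => exact fun hΓ => hΓ _ hm
  | topI => exact fun _ => trivial
  | botE _ ih => exact fun hΓ => (ih hΓ).elim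
  | andI _ _ ih1 ih2 => exact fun hΓ => ⟨ih1 hΓ, ih2 hΓ⟩
  | andE1 _ ih => exact fun hΓ => (ih hΓ).1
  | andE2 _ ih => exact fun hΓ => (ih hΓ).2
  | orI1 _ ih => exact fun hΓ => Or.inl (ih hΓ)
  | orI2 _ ih => exact fun hΓ => Or.inr (ih hΓ)
  | orE _ _ _ ih ih1 ih2 =>
    exact fun hΓ => (ih hΓ).elim (fun h => ih1 (ext hΓ h)) (fun h => ih2 (ext hΓ h))
  | impI _ ih => exact fun hΓ h => ih (ext hΓ h)
  | impE _ _ ih1 ih2 => exact fun hΓ => ih1 hΓ (ih2 hΓ)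
  | em _ => exact fun _ => Classical.em _

/-- The disjunction of the variables with index below `k`. -/
def disjBelow : ℕ → PropForm ℕ
  | 0 => .bot
  | k + 1 => .or (disjBelow k) (.var k)

/-- The formula `x_k → x_0 ∨ … ∨ x_{k-1}`; its negation says that `k` is the least index of a
true variable, so distinct members of the family have disjoint negations. -/
def cover (k : ℕ) : PropForm ℕ := .imp (.var k) (disjBelow k)

theorem prov_disjBelow {cl : Prop} {Γ : Set (PropForm ℕ)} {i j : ℕ} (hij : i < j)
    (h : Prov cl Γ (.var i)) : Prov cl Γ (disjBelow j) := by
  induction j with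
  | zero => omega
  | succ j ih =>
    rcases Nat.lt_succ_iff_lt_or_eq.1 hij with h' | rfl
    · exact .orI1 (ih h')
    · exact .orI2 h

theorem cover_or_cover {i j : ℕ} (hij : i < j) (Γ : Set (PropForm ℕ)) :
    CProv Γ (.or (cover i) (cover j)) := by
  refine .orE (.em (φ := .var i) trivial) (.orI2 (.impI ?_)) (.orI1 (.impI ?_))
  · exact prov_disjBelow hij (.ax (by simp))
  · exact .botE (.impE (φ := .var i) (.ax (by simp)) (.ax (by simp)))

theorem not_eval_disjBelow (i k : ℕ) (h : k ≤ i) : ¬eval (fun m => m = i) (disjBelow k) := by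
  induction k with
  | zero => exact id
  | succ k ih =>
    rintro (h' | h')
    · exact ih (by omega) h'
    · have : k = i := h'
      omega

theorem not_prov_cover (i : ℕ) : ¬CProv {.top} (cover i) := fun h =>
  not_eval_disjBelow i i le_rfl
    (eval_of_prov (fun m => m = i) h (by rintro γ rfl; trivial) rfl)

theorem no_translation (f : PropForm ℕ → PropForm V)
    (hor : ∀ φ ψ : PropForm ℕ, f (PropForm.or φ ψ) = PropForm.or (f φ) (f ψ))
    (hf : ∀ Γ : Set (PropForm ℕ), Γ.Nonempty →
        ∀ φ : PropForm ℕ, (CProv Γ φ ↔ IProv (f '' Γ) (f φ))) : False := by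
  have hf' : ∀ φ, CProv {.top} φ ↔ IProv {f .top} (f φ) := fun φ => by
    rw [hf _ (Set.singleton_nonempty _), Set.image_singleton]
  refine no_infinite_covering_family (f .top) (fun i => f (cover i))
    (fun i h => not_prov_cover i ((hf' _).2 h)) fun i j hij => ?_
  have h := (hf' _).1 (cover_or_cover hij {.top})
  rwa [hor] at h

end LatticeTranslation

/-- There is no consequence-respecting, `(∧,∨)`-preserving translation from `ω`-variable
classical propositional logic into `ω`-variable intuitionistic propositional logic, and
consequently none into `n`-variable intuitionistic logic for any `n`. -/
theorem no_classical_to_intuitionistic_lattice_translation :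
    (¬∃ f : PropForm ℕ → PropForm ℕ,
      (∀ φ ψ : PropForm ℕ, f (PropForm.and φ ψ) = PropForm.and (f φ) (f ψ)) ∧
      (∀ φ ψ : PropForm ℕ, f (PropForm.or φ ψ) = PropForm.or (f φ) (f ψ)) ∧
      (∀ Γ : Set (PropForm ℕ), Γ.Nonempty →
        ∀ φ : PropForm ℕ, (CProv Γ φ ↔ IProv (f '' Γ) (f φ)))) ∧
    ∀ n : ℕ, ¬∃ f : PropForm ℕ → PropForm (Fin n),
      (∀ φ ψ : PropForm ℕ, f (PropForm.and φ ψ) = PropForm.and (f φ) (f ψ)) ∧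
      (∀ φ ψ : PropForm ℕ, f (PropForm.or φ ψ) = PropForm.or (f φ) (f ψ)) ∧
      (∀ Γ : Set (PropForm ℕ), Γ.Nonempty →
        ∀ φ : PropForm ℕ, (CProv Γ φ ↔ IProv (f '' Γ) (f φ))) := by
  exact ⟨fun ⟨f, _, hor, hf⟩ => LatticeTranslation.no_translation f hor hf,
    fun _ ⟨f, _, hor, hf⟩ => LatticeTranslation.no_translation f hor hf⟩
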